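/- arXiv:1201.6477 — 2 statements merged into one kernel-verified Lean document; each statement's English description precedes it below -/
import Mathlib

section
/- For 0 < |x| < π, one has cos x/sin²x = 1/x² − Σ_{n=1}^∞ (2·(2n−1)·(2^{2n−1} − 1)·|B_{2n}|/(2n)!)·x^{2(n−1)}. -/
open Real

/-- The value of zeta at `2 * m + 2`. -/
noncomputable def zc (m : ℕ) : ℝ :=
  2 ^ (2 * m + 1) * π ^ (2 * m + 2) * |(bernoulli (2 * m + 2) : ℝ)| / (Nat.factorial (2 * m + 2))

lemma zc_hasSum (m : ℕ) : HasSum (fun k : ℕ => 1 / ((k : ℝ) + 1) ^ (2 * m + 2)) (zc m) := by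
  have h := hasSum_zeta_nat (k := m + 1) (by omega)
  have e : 2 * (m + 1) = 2 * m + 2 := by ring
  have e' : 2 * m + 2 - 1 = 2 * m + 1 := by omega
  rw [e, e'] at h
  have hn := h.nonneg (fun n => by positivity)
  rw [← abs_of_nonneg hn] at h
  have h3 : |(-1 : ℝ) ^ (m + 1 + 1) * 2 ^ (2 * m + 1) * π ^ (2 * m + 2) *
      (bernoulli (2 * m + 2) : ℝ) / (Nat.factorial (2 * m + 2))| = zc m := by
    unfold zc
    rw [abs_div, abs_mul, abs_mul, abs_mul, abs_pow, abs_neg, abs_one, one_pow, one_mul,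
      abs_of_pos (show (0 : ℝ) < 2 ^ (2 * m + 1) by positivity),
      abs_of_pos (show (0 : ℝ) < π ^ (2 * m + 2) by positivity), Nat.abs_cast]
  rw [h3] at h
  rw [← hasSum_nat_add_iff' 1] at h
  simpa using h

lemma zc_nonneg (m : ℕ) : 0 ≤ zc m := (zc_hasSum m).nonneg (fun n => by positivity)

lemma zc_le (m : ℕ) : zc m ≤ zc 0 := by
  refine hasSum_le (fun k => ?_) (zc_hasSum m) (zc_hasSum 0)
  apply one_div_le_one_div_of_le (by positivity)
  exact pow_le_pow_right₀ (by linarith [(Nat.cast_nonneg k : (0:ℝ) ≤ k)]) (by omega)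

lemma cot_real (y : ℝ) (h0 : y ≠ 0) (h1 : |y| < 1) :
    HasSum (fun k : ℕ => 1 / (((k : ℝ) + 1) ^ 2 - y ^ 2))
      ((1 / y - π * Real.cot (π * y)) / (2 * y)) := by
  have hz : (y : ℂ) ∈ Complex.integerComplement := by
    rw [Complex.mem_integerComplement_iff]
    rintro ⟨n, hn⟩
    have hn' : (n : ℝ) = y := by exact_mod_cast hn
    rw [← hn'] at h1 h0
    have : |n| < 1 := by exact_mod_cast h1
    rw [Int.abs_lt_one_iff] at this
    simp [this] at h0
  have h := (summable_cotTerm hz).hasSum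
  have h2 := cot_series_rep' hz
  unfold cotTerm at h
  rw [← h2] at h
  have h3 : HasSum (fun k : ℕ => 1 / (y - ((k : ℝ) + 1)) + 1 / (y + ((k : ℝ) + 1)))
      (π * Real.cot (π * y) - 1 / y) := by
    rw [← Complex.hasSum_ofReal]
    push_cast
    exact h
  have h4 := h3.mul_left (-1 / (2 * y))
  convert! h4 using 1
  · ext k
    obtain ⟨ha, hb⟩ := abs_lt.mp h1
    have hk : (0 : ℝ) ≤ k := Nat.cast_nonneg k
    have e1 : y - ((k : ℝ) + 1) ≠ 0 := by linarith
    have e2 : y + ((k : ℝ) + 1) ≠ 0 := by linarith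
    have e3 : ((k : ℝ) + 1) ^ 2 - y ^ 2 ≠ 0 := by
      have : ((k : ℝ) + 1) ^ 2 - y ^ 2 = -((y - ((k : ℝ) + 1)) * (y + ((k : ℝ) + 1))) := by ring
      rw [this]
      exact neg_ne_zero.mpr (mul_ne_zero e1 e2)
    field_simp
    ring
  · field_simp
    ring

lemma cot_series (y : ℝ) (h0 : y ≠ 0) (h1 : |y| < 1) :
    HasSum (fun m : ℕ => 2 * zc m * y ^ (2 * m + 1)) (1 / y - π * Real.cot (π * y)) := by
  have hy2 : y ^ 2 < 1 := (sq_lt_one_iff_abs_lt_one y).mpr h1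
  let F : ℕ × ℕ → ℝ := fun p => (y ^ 2) ^ p.2 / ((p.1 : ℝ) + 1) ^ (2 * p.2 + 2)
  have hF0 : 0 ≤ F := fun p => by
    show 0 ≤ (y ^ 2) ^ p.2 / ((p.1 : ℝ) + 1) ^ (2 * p.2 + 2)
    positivity
  have hin : ∀ k : ℕ, HasSum (fun m => F (k, m)) (1 / (((k : ℝ) + 1) ^ 2 - y ^ 2)) := by
    intro k
    have hk : (0 : ℝ) ≤ k := Nat.cast_nonneg k
    have hk1 : 1 ≤ ((k : ℝ) + 1) ^ 2 := by nlinarith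
    have hg := hasSum_geometric_of_lt_one (r := y ^ 2 / ((k : ℝ) + 1) ^ 2) (by positivity)
      (by rw [div_lt_one (by positivity)]; linarith)
    have hg2 := hg.mul_left (1 / ((k : ℝ) + 1) ^ 2)
    convert! hg2 using 1
    · ext m
      simp only [F]
      rw [div_pow, pow_add, pow_mul ((k : ℝ) + 1)]
      field_simp
    · have e3 : ((k : ℝ) + 1) ^ 2 - y ^ 2 ≠ 0 := by linarith
      have e4 : 1 - y ^ 2 / ((k : ℝ) + 1) ^ 2 = (((k : ℝ) + 1) ^ 2 - y ^ 2) / ((k : ℝ) + 1) ^ 2 := by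
        field_simp
      rw [e4]
      field_simp
  have hk := cot_real y h0 h1
  have hS : Summable F := by
    rw [summable_prod_of_nonneg hF0]
    refine ⟨fun k => (hin k).summable, ?_⟩
    simp_rw [fun k => (hin k).tsum_eq]
    exact hk.summable
  have hT := hS.hasSum
  rw [(hT.prod_fiberwise hin).unique hk] at hT
  have hT' := (Equiv.prodComm ℕ ℕ).hasSum_iff.mpr hT
  have hm : ∀ m : ℕ, HasSum (fun k => (F ∘ (Equiv.prodComm ℕ ℕ)) (m, k)) ((y ^ 2) ^ m * zc m) := by
    intro m
    convert! (zc_hasSum m).mul_left ((y ^ 2) ^ m) using 1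
    ext k
    simp [F, div_eq_mul_inv]
  have := (hT'.prod_fiberwise hm).mul_left (2 * y)
  convert! this using 1
  · ext m
    rw [← pow_mul]
    ring
  · field_simp

lemma csc_sq_series (y : ℝ) (h0 : y ≠ 0) (h1 : |y| < 1) :
    HasSum (fun m : ℕ => 2 * (2 * m + 1) * zc m * y ^ (2 * m))
      (π ^ 2 / Real.sin (π * y) ^ 2 - 1 / y ^ 2) := by
  obtain ⟨r, hr1, hr2⟩ := exists_between h1
  have hr0 : 0 < r := lt_of_le_of_lt (abs_nonneg y) hr1
  have hu : Summable (fun m : ℕ => 2 * (2 * m + 1) * zc 0 * (r ^ 2) ^ m) := by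
    have hn : ‖r ^ 2‖ < 1 := by
      rw [Real.norm_of_nonneg (by positivity)]
      nlinarith
    have s1 := (summable_pow_mul_geometric_of_norm_lt_one 1 hn).mul_left (4 * zc 0)
    have s0 := (summable_pow_mul_geometric_of_norm_lt_one 0 hn).mul_left (2 * zc 0)
    refine (s1.add s0).congr fun m => ?_
    simp only [pow_one, pow_zero]
    ring
  have hb : ∀ (m : ℕ), ∀ z ∈ Set.Ioo (-r) r,
      ‖2 * (2 * (m : ℝ) + 1) * zc m * z ^ (2 * m)‖ ≤ 2 * (2 * m + 1) * zc 0 * (r ^ 2) ^ m := by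
    intro m z hz
    have hz2 : z ^ 2 ≤ r ^ 2 := sq_le_sq' hz.1.le hz.2.le
    have := zc_nonneg m
    rw [pow_mul, Real.norm_of_nonneg (by positivity)]
    have := zc_le m
    have := zc_nonneg 0
    gcongr
  have hyt : y ∈ Set.Ioo (-r) r := abs_lt.mp hr1
  have hd := hasDerivAt_tsum_of_isPreconnected (g := fun (m : ℕ) (z : ℝ) => 2 * zc m * z ^ (2 * m + 1))
    (g' := fun (m : ℕ) (z : ℝ) => 2 * (2 * (m : ℝ) + 1) * zc m * z ^ (2 * m))
    (t := Set.Ioo (-r) r) (y₀ := y) (y := y) hu isOpen_Ioo isPreconnected_Ioo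
    (fun m z _ => by
      convert! (hasDerivAt_pow (2 * m + 1) z).const_mul (2 * zc m) using 1
      push_cast
      ring) hb hyt (cot_series y h0 h1).summable hyt
  have hsum : Summable (fun m : ℕ => 2 * (2 * (m : ℝ) + 1) * zc m * y ^ (2 * m)) :=
    Summable.of_norm_bounded hu (fun m => hb m y hyt)
  have hs : Real.sin (π * y) ≠ 0 := by
    obtain ⟨ha, hb⟩ := abs_lt.mp h1
    rw [Ne, Real.sin_eq_zero_iff_of_lt_of_lt (by nlinarith [pi_pos]) (by nlinarith [pi_pos])]
    exact mul_ne_zero pi_ne_zero h0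
  have hd2 : HasDerivAt (fun z => 1 / z - π * (Real.cos (π * z) / Real.sin (π * z)))
      (π ^ 2 / Real.sin (π * y) ^ 2 - 1 / y ^ 2) y := by
    have hl : HasDerivAt (fun z : ℝ => π * z) π y := by
      simpa using (hasDerivAt_id y).const_mul π
    have hq := ((hl.cos).div (hl.sin) hs).const_mul π
    have hi := hasDerivAt_inv h0
    simp only [one_div]
    convert! hi.sub hq using 1
    have := Real.sin_sq_add_cos_sq (π * y)
    field_simp
    linear_combination (-(π ^ 2 * y ^ 2)) * this
  have hev : (fun z => ∑' m : ℕ, 2 * zc m * z ^ (2 * m + 1)) =ᶠ[nhds y]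
      (fun z => 1 / z - π * (Real.cos (π * z) / Real.sin (π * z))) := by
    have e1 : ∀ᶠ z in nhds y, z ≠ 0 := isOpen_ne.mem_nhds h0
    have e2 : ∀ᶠ z in nhds y, |z| < 1 := (isOpen_lt continuous_abs continuous_const).mem_nhds h1
    filter_upwards [e1, e2] with z hz1 hz2
    rw [(cot_series z hz1 hz2).tsum_eq, Real.cot_eq_cos_div_sin]
  have := hd.unique (hd2.congr_of_eventuallyEq hev)
  rw [← this]
  exact hsum.hasSum

theorem cos_div_sin_sq_series (x : ℝ) (h1 : 0 < |x|) (h2 : |x| < π) :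
    Real.cos x / Real.sin x ^ 2 =
      1 / x ^ 2 - ∑' n : ℕ,
        2 * (2 * (n + 1) - 1) * (2 ^ (2 * (n + 1) - 1) - 1) *
          |(bernoulli (2 * (n + 1)) : ℝ)| / (Nat.factorial (2 * (n + 1))) *
          x ^ (2 * ((n + 1) - 1)) := by
  have hx : x ≠ 0 := abs_pos.mp h1
  have hp := pi_pos
  have hy1 : |x / π| < 1 := by
    rw [abs_div, abs_of_pos hp, div_lt_one hp]
    exact h2
  have hy2 : |x / π / 2| < 1 := by
    rw [abs_div, abs_of_pos (two_pos : (0 : ℝ) < 2)]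
    linarith
  have s1 := csc_sq_series (x / π) (by positivity) hy1
  have s2 := csc_sq_series (x / π / 2) (by positivity) hy2
  have h := (s1.mul_left (1 / π ^ 2)).sub (s2.mul_left (1 / (2 * π ^ 2)))
  rw [show π * (x / π) = x by field_simp, show π * (x / π / 2) = x / 2 by field_simp] at h
  have hs : Real.sin x ≠ 0 := by
    obtain ⟨ha, hb⟩ := abs_lt.mp h2
    rw [Ne, Real.sin_eq_zero_iff_of_lt_of_lt ha hb]
    exact hx
  have ht : HasSum (fun n : ℕ => 2 * (2 * ((n : ℝ) + 1) - 1) * (2 ^ (2 * (n + 1) - 1) - 1) *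
          |(bernoulli (2 * (n + 1)) : ℝ)| / (Nat.factorial (2 * (n + 1))) *
          x ^ (2 * ((n + 1) - 1))) (1 / x ^ 2 - Real.cos x / Real.sin x ^ 2) := by
    convert! h using 1
    · ext n
      unfold zc
      rw [show 2 * (n + 1) - 1 = 2 * n + 1 by omega, show 2 * (n + 1) = 2 * n + 2 by ring,
        show 2 * (n + 1 - 1) = 2 * n by omega, div_pow, div_pow, div_pow]
      field_simp
      ring
    · have e1 : Real.sin x = 2 * Real.sin (x / 2) * Real.cos (x / 2) := by
        rw [← Real.sin_two_mul]; congr 1; ring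
      have e2 : Real.cos x = 2 * Real.cos (x / 2) ^ 2 - 1 := by
        rw [← Real.cos_two_mul]; congr 1; ring
      have e3 := Real.sin_sq_add_cos_sq (x / 2)
      rw [e1] at hs
      have n1 : Real.sin (x / 2) ≠ 0 := fun h => by simp [h] at hs
      have n2 : Real.cos (x / 2) ≠ 0 := fun h => by simp [h] at hs
      rw [e1, e2]
      field_simp
      ring
  rw [ht.tsum_eq]
  ring
end

section
/- For 0 < |x| < π, one has 1/sin³x = 1/(2x) + 1/x³ + (1/2)·Σ_{n=1}^∞ (1/(2n−1)!)·[ (2^{2n+1} − 1)·|B_{2n+2}|/(n+1) + (2^{2n−1} − 1)·|B_{2n}|/n ]·x^{2n−1}. -/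
open Real

namespace CscCube

open PowerSeries

/-- `exp (a X)` as a formal power series. -/
noncomputable def E (a : ℂ) : ℂ⟦X⟧ := rescale a (PowerSeries.exp ℂ)

/-- The formal power series of `x / sin x`. -/
noncomputable def K : ℂ⟦X⟧ :=
  PowerSeries.C 2 * rescale Complex.I (bernoulliPowerSeries ℂ)
    - rescale (2 * Complex.I) (bernoulliPowerSeries ℂ)

/-- The formal power series of `2 x ^ 3 / sin x ^ 3`. -/
noncomputable def Q : ℂ⟦X⟧ :=
  X ^ 2 * (d⁄dX ℂ (d⁄dX ℂ K)) - 2 * X * d⁄dX ℂ K + 2 * K + X ^ 2 * K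

lemma coeff_E (a : ℂ) (k : ℕ) : coeff k (E a) = a ^ k / (k.factorial : ℂ) := by
  simp [E, coeff_rescale, coeff_exp, div_eq_mul_inv]

lemma coeff_K (k : ℕ) :
    coeff k K = (2 - 2 ^ k) * Complex.I ^ k * ((bernoulli k : ℂ) / (k.factorial : ℂ)) := by
  simp [K, coeff_rescale, bernoulliPowerSeries, mul_pow]
  ring

lemma E_mul (a b : ℂ) : E a * E b = E (a + b) := exp_mul_exp_eq_exp_add a b

lemma E_zero : E 0 = 1 := by
  simp [E]

lemma deriv_E (a : ℂ) : d⁄dX ℂ (E a) = PowerSeries.C a * E a := by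
  ext k
  rw [coeff_derivative, coeff_C_mul, coeff_E, coeff_E, Nat.factorial_succ]
  have h : (k.factorial : ℂ) ≠ 0 := by exact_mod_cast k.factorial_ne_zero
  have h' : (k : ℂ) + 1 ≠ 0 := by exact_mod_cast k.succ_ne_zero
  push_cast
  field_simp
  ring

lemma bern_E (a : ℂ) :
    rescale a (bernoulliPowerSeries ℂ) * (E a - 1) = PowerSeries.C a * X := by
  have := congrArg (rescale a) (bernoulliPowerSeries_mul_exp_sub_one ℂ)
  simpa [map_mul, map_sub, rescale_X, E] using this

lemma C_two : (PowerSeries.C (2 : ℂ) : ℂ⟦X⟧) = 2 := map_ofNat _ 2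

lemma CI_sq : (PowerSeries.C Complex.I : ℂ⟦X⟧) ^ 2 = -1 := by
  rw [← map_pow, Complex.I_sq]; simp

lemma K_mul : K * (E Complex.I - E (-Complex.I)) = 2 * PowerSeries.C Complex.I * X := by
  have h1 := bern_E Complex.I
  have h2 := bern_E (2 * Complex.I)
  have h3 : E Complex.I * E Complex.I = E (2 * Complex.I) := by rw [E_mul]; ring_nf
  have h4 : E Complex.I * E (-Complex.I) = 1 := by rw [E_mul, add_neg_cancel, E_zero]
  have hc : (PowerSeries.C (2 * Complex.I) : ℂ⟦X⟧) = 2 * PowerSeries.C Complex.I := by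
    rw [map_mul, C_two]
  have hc2 : (PowerSeries.C (2 : ℂ) : ℂ⟦X⟧) = 2 := C_two
  rw [← h3, hc] at h2
  unfold K
  rw [hc2]
  generalize rescale Complex.I (bernoulliPowerSeries ℂ) = b1 at *
  generalize rescale (2 * Complex.I) (bernoulliPowerSeries ℂ) = b2 at *
  generalize E Complex.I = A at *
  generalize E (-Complex.I) = B at *
  generalize (PowerSeries.C Complex.I : ℂ⟦X⟧) = i at *
  have key : (2 * b1 - b2) * (A - B) * A = 2 * i * X * A := by
    linear_combination 2 * (A + 1) * h1 - h2 - (2 * b1 - b2) * h4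
  linear_combination B * key - ((2 * b1 - b2) * (A - B) - 2 * i * X) * h4

lemma Q_mul :
    (E Complex.I - E (-Complex.I)) ^ 3 * Q = -16 * PowerSeries.C Complex.I * X ^ 3 := by
  have e1 := K_mul
  have h4 : E Complex.I * E (-Complex.I) = 1 := by rw [E_mul, add_neg_cancel, E_zero]
  have hi := CI_sq
  have dA := deriv_E Complex.I
  have dB := deriv_E (-Complex.I)
  rw [map_neg] at dB
  have di : d⁄dX ℂ (PowerSeries.C Complex.I) = 0 := derivative_C
  have d2 : d⁄dX ℂ (2 : ℂ⟦X⟧) = 0 := by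
    have : d⁄dX ℂ (PowerSeries.C (2 : ℂ)) = 0 := derivative_C
    rwa [C_two] at this
  have e2 := congrArg (d⁄dX ℂ) e1
  have e3 := congrArg (d⁄dX ℂ) e2
  simp only [Derivation.leibniz, map_sub, map_add, dA, dB, di, d2, derivative_X, smul_eq_mul,
    map_neg, mul_neg, neg_mul, mul_zero, add_zero, mul_one]
    at e2 e3
  unfold Q
  generalize d⁄dX ℂ (d⁄dX ℂ K) = K2 at *
  generalize d⁄dX ℂ K = K1 at *
  generalize K = K0 at *
  generalize E Complex.I = A at *
  generalize E (-Complex.I) = B at *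
  generalize (PowerSeries.C Complex.I : ℂ⟦X⟧) = i at *
  have f2 : K1 * (A - B) + i * K0 * (A + B) = 2 * i := by linear_combination e2
  have f3 : K2 * (A - B) + 2 * i * K1 * (A + B) - K0 * (A - B) = 0 := by
    linear_combination e3 - K0 * (A - B) * hi
  have f4 : (A + B) ^ 2 - (A - B) ^ 2 = 4 := by linear_combination 4 * h4
  generalize A - B = D at *
  generalize A + B = S at *
  linear_combination X ^ 2 * D ^ 2 * f3 - 2 * X * D ^ 2 * f2 + (2 + X ^ 2) * D ^ 2 * e1
    + X ^ 2 * D ^ 2 * e1 - 2 * i * X ^ 2 * D * S * f2 - 2 * X ^ 2 * S ^ 2 * e1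
    + 2 * i * X * S * D * e1 - 4 * i * X ^ 3 * f4 + 2 * X ^ 2 * D * K0 * S ^ 2 * hi

/-! ### Evaluation -/

/-- absolute convergence of `F` at `x` with value `a` -/
def Ev (x : ℂ) (F : ℂ⟦X⟧) (a : ℂ) : Prop :=
  Summable (fun k => ‖coeff k F * x ^ k‖) ∧ HasSum (fun k => coeff k F * x ^ k) a

lemma Ev.mul {x : ℂ} {F G : ℂ⟦X⟧} {a b : ℂ} (hF : Ev x F a) (hG : Ev x G b) :
    Ev x (F * G) (a * b) := by
  have hc : ∀ n, coeff n (F * G) * x ^ n = ∑ kl ∈ Finset.HasAntidiagonal.antidiagonal n,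
      (coeff kl.1 F * x ^ kl.1) * (coeff kl.2 G * x ^ kl.2) := by
    intro n
    rw [coeff_mul, Finset.sum_mul]
    refine Finset.sum_congr rfl fun p hp => ?_
    rw [← Finset.HasAntidiagonal.mem_antidiagonal.mp hp, pow_add]; ring
  have hs := summable_norm_sum_mul_antidiagonal_of_summable_norm hF.1 hG.1
  have ht := tsum_mul_tsum_eq_tsum_sum_antidiagonal_of_summable_norm hF.1 hG.1
  unfold Ev
  simp only [hc]
  refine ⟨hs, ?_⟩
  rw [← hF.2.tsum_eq, ← hG.2.tsum_eq, ht]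
  exact hs.of_norm.hasSum

lemma Ev.sub {x : ℂ} {F G : ℂ⟦X⟧} {a b : ℂ} (hF : Ev x F a) (hG : Ev x G b) :
    Ev x (F - G) (a - b) := by
  unfold Ev
  simp only [map_sub, sub_mul]
  exact ⟨(hF.1.add hG.1).of_nonneg_of_le (fun _ => norm_nonneg _) (fun _ => norm_sub_le _ _),
    hF.2.sub hG.2⟩

lemma Ev_E (x a : ℂ) : Ev x (E a) (Complex.exp (a * x)) := by
  unfold Ev
  have hc : ∀ k, coeff k (E a) * x ^ k = (a * x) ^ k / (k.factorial : ℂ) := by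
    intro k; rw [coeff_E, mul_pow]; ring
  simp only [hc]
  refine ⟨NormedSpace.norm_expSeries_div_summable (a * x), ?_⟩
  rw [Complex.exp_eq_exp_ℂ]
  exact NormedSpace.expSeries_div_hasSum_exp (a * x)

lemma hasSum_X3 (x c : ℂ) :
    HasSum (fun k => coeff k (PowerSeries.C c * X ^ 3 : ℂ⟦X⟧) * x ^ k) (c * x ^ 3) := by
  have := hasSum_single (f := fun k => coeff k (PowerSeries.C c * X ^ 3 : ℂ⟦X⟧) * x ^ k) 3
    (by intro k hk; simp [coeff_C_mul, coeff_X_pow, hk])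
  simpa [coeff_C_mul, coeff_X_pow] using this

/-! ### Bernoulli bounds -/

lemma bern_abs (m : ℕ) (hm : m ≠ 0) :
    |(bernoulli (2 * m) : ℝ)| = (-1) ^ (m + 1) * (bernoulli (2 * m) : ℝ) := by
  have h := hasSum_zeta_nat hm
  have h0 := hasSum_le (fun n : ℕ => (by positivity : (0 : ℝ) ≤ 1 / (n : ℝ) ^ (2 * m))) hasSum_zero h
  have hp : 0 < (2 : ℝ) ^ (2 * m - 1) * π ^ (2 * m) / ((2 * m).factorial : ℝ) := by positivity
  have h1 : 0 ≤ (-1) ^ (m + 1) * (bernoulli (2 * m) : ℝ) := by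
    refine nonneg_of_mul_nonneg_right (b := (-1) ^ (m + 1) * (bernoulli (2 * m) : ℝ)) ?_ hp
    convert h0 using 1
    ring
  rw [← abs_of_nonneg h1, abs_mul, abs_pow]
  simp

lemma bern_bound (m : ℕ) (hm : m ≠ 0) :
    2 ^ (2 * m) * (|(bernoulli (2 * m) : ℝ)| / ((2 * m).factorial : ℝ))
      ≤ (π ^ 2 / 3) / π ^ (2 * m) := by
  have h := hasSum_zeta_nat hm
  have h2 := hasSum_zeta_two
  have hle := hasSum_le (fun n => ?_) h h2
  · have e : (2 : ℝ) ^ (2 * m) = 2 * 2 ^ (2 * m - 1) := by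
      rw [← pow_succ']; congr 1; omega
    rw [le_div_iff₀ (by positivity), e, bern_abs m hm]
    calc _ = 2 * ((-1 : ℝ) ^ (m + 1) * (2 : ℝ) ^ (2 * m - 1) * π ^ (2 * m) *
        bernoulli (2 * m) / ((2 * m).factorial : ℝ)) := by ring
      _ ≤ 2 * (π ^ 2 / 6) := by gcongr
      _ = _ := by ring
  · rcases Nat.eq_zero_or_pos n with rfl | hn
    · simp [hm]
    · have : (1 : ℝ) ≤ n := by exact_mod_cast hn
      apply one_div_le_one_div_of_le (by positivity)
      exact pow_le_pow_right₀ this (by omega)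

lemma coeff_K_odd (k : ℕ) (hk : Odd k) : coeff k K = 0 := by
  rw [coeff_K]
  by_cases h1 : k = 1
  · subst h1; norm_num
  · have : bernoulli k = 0 := bernoulli_eq_zero_of_odd hk (by have := hk.pos; omega)
    simp [this]

lemma coeff_K_zero : coeff 0 K = 1 := by
  rw [coeff_K]; norm_num

lemma coeff_K_even (m : ℕ) (hm : m ≠ 0) :
    coeff (2 * m) K =
      (((2 ^ (2 * m) - 2) * (|(bernoulli (2 * m) : ℝ)| / ((2 * m).factorial : ℝ)) : ℝ) : ℂ) := by
  rw [coeff_K, bern_abs m hm, pow_mul Complex.I, Complex.I_sq]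
  push_cast
  ring

lemma norm_coeff_K (k : ℕ) : ‖coeff k K‖ ≤ (π ^ 2 / 3) / π ^ k := by
  rcases Nat.even_or_odd' k with ⟨m, rfl | rfl⟩
  · by_cases hm : m = 0
    · subst hm
      rw [mul_zero, coeff_K_zero]
      have := Real.pi_gt_three
      simp
      nlinarith
    · refine le_trans ?_ (bern_bound m hm)
      rw [coeff_K_even m hm, Complex.norm_real, Real.norm_eq_abs, abs_of_nonneg]
      · gcongr; linarith
      · have : (2 : ℝ) ^ 1 ≤ 2 ^ (2 * m) := pow_le_pow_right₀ (by norm_num) (by omega)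
        apply mul_nonneg (by linarith) (by positivity)
  · rw [coeff_K_odd _ (by simp)]
    simp; positivity

lemma coeff_Q_add_two (k : ℕ) :
    coeff (k + 2) Q = k * (k + 1) * coeff (k + 2) K + coeff k K := by
  have h2 : (2 : ℂ⟦X⟧) = PowerSeries.C (2 : ℂ) := C_two.symm
  unfold Q
  rw [h2, mul_assoc, map_add, map_add, map_sub, coeff_X_pow_mul, coeff_X_pow_mul, coeff_C_mul,
    coeff_C_mul, coeff_succ_X_mul, coeff_derivative, coeff_derivative]
  push_cast
  ring

lemma coeff_Q_zero : coeff 0 Q = 2 := by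
  have h2 : (2 : ℂ⟦X⟧) = PowerSeries.C (2 : ℂ) := C_two.symm
  have := coeff_K_zero
  unfold Q
  rw [h2, mul_assoc]
  simp at this
  simp [this]

lemma coeff_Q_odd (k : ℕ) (hk : Odd k) : coeff k Q = 0 := by
  obtain ⟨m, rfl⟩ := hk
  rcases m with _ | m
  · have h2 : (2 : ℂ⟦X⟧) = PowerSeries.C (2 : ℂ) := C_two.symm
    have h1 := coeff_K_odd 1 (by simp)
    unfold Q
    rw [h2, mul_assoc, map_add, map_add, map_sub, coeff_X_pow_mul', coeff_X_pow_mul', coeff_C_mul,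
      coeff_C_mul, coeff_succ_X_mul]
    have h0 : coeff 0 (d⁄dX ℂ K) = 0 := by
      rw [coeff_derivative, zero_add, h1, zero_mul]
    simp only [mul_zero, zero_add, h0, h1]
    simp
  · have : 2 * (m + 1) + 1 = (2 * m + 1) + 2 := by ring
    rw [this, coeff_Q_add_two, coeff_K_odd (2 * m + 1) ⟨m, rfl⟩,
      coeff_K_odd (2 * m + 1 + 2) ⟨m + 1, by ring⟩]
    simp

lemma summable_Q (x : ℝ) (h2 : |x| < π) :
    Summable (fun k => ‖coeff k Q * (x : ℂ) ^ k‖) := by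
  rw [← summable_nat_add_iff 2]
  set r := |x| / π with hr
  have hr0 : 0 ≤ r := by positivity
  have hr1 : ‖r‖ < 1 := by
    rw [Real.norm_eq_abs, abs_of_nonneg hr0, hr, div_lt_one Real.pi_pos]; exact h2
  have s2 := (summable_pow_mul_geometric_of_norm_lt_one 2 hr1)
  have s1 := (summable_pow_mul_geometric_of_norm_lt_one 1 hr1)
  have s0 := (summable_pow_mul_geometric_of_norm_lt_one 0 hr1)
  have s := ((s2.add s1).mul_left (π ^ 2 / 3 * r ^ 2)).add (s0.mul_left (π ^ 2 / 3 * |x| ^ 2))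
  refine s.of_nonneg_of_le (fun _ => norm_nonneg _) fun k => ?_
  rw [coeff_Q_add_two, norm_mul, norm_pow, Complex.norm_real, Real.norm_eq_abs]
  have b1 : ‖(k * (k + 1) * coeff (k + 2) K + coeff k K : ℂ)‖
      ≤ k * (k + 1) * ((π ^ 2 / 3) / π ^ (k + 2)) + (π ^ 2 / 3) / π ^ k := by
    refine (norm_add_le _ _).trans ?_
    have : ‖(k * (k + 1) : ℂ)‖ = k * (k + 1) := by
      have : (k * (k + 1) : ℂ) = ((k * (k + 1) : ℝ) : ℂ) := by push_cast; ring
      rw [this, Complex.norm_real, Real.norm_eq_abs, abs_of_nonneg (by positivity)]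
    rw [norm_mul, this]
    gcongr
    · exact norm_coeff_K _
    · exact norm_coeff_K _
  calc _ ≤ (k * (k + 1) * ((π ^ 2 / 3) / π ^ (k + 2)) + (π ^ 2 / 3) / π ^ k) * |x| ^ (k + 2) := by
        gcongr
    _ = _ := by
        simp only [hr, div_pow]
        have := Real.pi_pos.ne'
        field_simp
        ring

lemma hasSum_Q (x : ℝ) (h1 : 0 < |x|) (h2 : |x| < π) :
    HasSum (fun k => coeff k Q * (x : ℂ) ^ k) (2 * (x : ℂ) ^ 3 / Complex.sin x ^ 3) := by
  have hs := summable_Q x h2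
  have hQ : Ev x Q (∑' k, coeff k Q * (x : ℂ) ^ k) := ⟨hs, hs.of_norm.hasSum⟩
  have hD := (Ev_E x Complex.I).sub (Ev_E x (-Complex.I))
  have hP := ((hD.mul (hD.mul hD)).mul hQ).2
  have hc : (E Complex.I - E (-Complex.I)) * ((E Complex.I - E (-Complex.I)) *
      (E Complex.I - E (-Complex.I))) * Q = PowerSeries.C (-16 * Complex.I) * X ^ 3 := by
    have := Q_mul
    have h16 : (PowerSeries.C (-16 * Complex.I) : ℂ⟦X⟧) = -16 * PowerSeries.C Complex.I := by
      rw [map_mul, map_neg, map_ofNat]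
    rw [h16, ← this]; ring
  rw [hc] at hP
  have hu := hP.unique (hasSum_X3 _ _)
  have hsin : Complex.exp (Complex.I * x) - Complex.exp (-Complex.I * x)
      = 2 * Complex.I * Complex.sin x := by
    rw [Complex.sin, neg_mul, neg_mul, mul_comm Complex.I]
    linear_combination -(Complex.exp (-(x * Complex.I)) - Complex.exp (x * Complex.I)) * Complex.I_sq
  have hs0 : Complex.sin x ≠ 0 := by
    rw [← Complex.ofReal_sin]
    norm_cast
    intro h
    have := (Real.sin_eq_zero_iff_of_lt_of_lt (abs_lt.mp h2).1 (abs_lt.mp h2).2).mp h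
    rw [this] at h1; simp at h1
  rw [hsin] at hu
  have : ∑' k, coeff k Q * (x : ℂ) ^ k = 2 * (x : ℂ) ^ 3 / Complex.sin x ^ 3 := by
    rw [eq_div_iff (pow_ne_zero 3 hs0)]
    generalize ∑' k, coeff k Q * (x : ℂ) ^ k = q at *
    generalize Complex.sin (x : ℂ) = s at *
    linear_combination (Complex.I / 8) * hu +
      (-2 * x ^ 3 - (Complex.I ^ 2 - 1) * s ^ 3 * q) * Complex.I_sq
  rw [← this]
  exact hQ.2

end CscCube

open CscCube in
theorem csc_cube_series (x : ℝ) (h1 : 0 < |x|) (h2 : |x| < π) :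
    1 / Real.sin x ^ 3 =
      1 / (2 * x) + 1 / x ^ 3 + (1 / 2) * ∑' n : ℕ,
        (1 / (Nat.factorial (2 * (n + 1) - 1)) : ℝ) *
          ((2 ^ (2 * (n + 1) + 1) - 1) * |(bernoulli (2 * (n + 1) + 2) : ℝ)| / ((n + 1) + 1) +
            (2 ^ (2 * (n + 1) - 1) - 1) * |(bernoulli (2 * (n + 1)) : ℝ)| / (n + 1)) *
          x ^ (2 * (n + 1) - 1) := by
  have hx : x ≠ 0 := abs_pos.mp h1
  set T : ℕ → ℝ := fun n => (1 / (Nat.factorial (2 * (n + 1) - 1)) : ℝ) *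
          ((2 ^ (2 * (n + 1) + 1) - 1) * |(bernoulli (2 * (n + 1) + 2) : ℝ)| / ((n + 1) + 1) +
            (2 ^ (2 * (n + 1) - 1) - 1) * |(bernoulli (2 * (n + 1)) : ℝ)| / (n + 1)) *
          x ^ (2 * (n + 1) - 1) with hT
  have hq := hasSum_Q x h1 h2
  have hinj : Function.Injective (fun m : ℕ => 2 * m) := fun a b h => by simpa using h
  rw [← hinj.hasSum_iff] at hq
  swap
  · intro k hk
    have : Odd k := by
      rw [← Nat.not_even_iff_odd]
      rintro ⟨m, rfl⟩
      exact hk ⟨m, by simp; ring⟩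
    rw [coeff_Q_odd k this, zero_mul]
  rw [← hasSum_nat_add_iff' 2] at hq
  have hterm : ∀ n : ℕ, PowerSeries.coeff (2 * (n + 2)) Q * (x : ℂ) ^ (2 * (n + 2))
      = ((T n * x ^ 3 : ℝ) : ℂ) := by
    intro n
    have e : 2 * (n + 2) = 2 * (n + 1) + 2 := by ring
    have eK := coeff_K_even (n + 2) (by omega)
    rw [e, coeff_Q_add_two, coeff_K_even (n + 1) (by omega), ← e, eK]
    rw [← Complex.ofReal_pow]
    norm_cast
    simp only [hT]
    rw [e]
    have e1 : 2 * (n + 1) - 1 = 2 * n + 1 := by omega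
    have e2 : 2 * (n + 1) + 2 = 2 * n + 1 + 1 + 1 + 1 := by ring
    have e3 : 2 * (n + 1) = 2 * n + 1 + 1 := by ring
    rw [e1]
    rw [e2, e3]
    simp only [Nat.factorial_succ (2 * n + 1 + 1 + 1), Nat.factorial_succ (2 * n + 1 + 1),
      Nat.factorial_succ (2 * n + 1)]
    have hf : ((2 * n + 1).factorial : ℝ) ≠ 0 := by exact_mod_cast Nat.factorial_ne_zero _
    generalize (2 * n + 1).factorial = f at *
    push_cast
    have p1 : (n : ℝ) + 1 ≠ 0 := by positivity
    have p2 : (n : ℝ) + 1 + 1 ≠ 0 := by positivity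
    have p3 : (2 * n : ℝ) + 1 + 1 ≠ 0 := by positivity
    have p4 : (2 * n : ℝ) + 1 + 1 + 1 ≠ 0 := by positivity
    have p5 : (2 * n : ℝ) + 1 + 1 + 1 + 1 ≠ 0 := by positivity
    field_simp
    ring
  have hfun : (fun n => ((fun k => PowerSeries.coeff k Q * (x : ℂ) ^ k) ∘ fun m => 2 * m) (n + 2))
      = fun n => ((T n * x ^ 3 : ℝ) : ℂ) := by
    funext n; exact hterm n
  rw [hfun] at hq
  have hQ2 : PowerSeries.coeff 2 Q = 1 := by
    have := coeff_Q_add_two 0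
    rw [coeff_K_zero] at this
    simpa using this
  have hval : 2 * (x : ℂ) ^ 3 / Complex.sin x ^ 3 - ∑ i ∈ Finset.range 2,
      ((fun k => PowerSeries.coeff k Q * (x : ℂ) ^ k) ∘ fun m => 2 * m) i
      = ((2 * x ^ 3 / Real.sin x ^ 3 - (2 + x ^ 2) : ℝ) : ℂ) := by
    rw [Finset.sum_range_succ, Finset.sum_range_one]
    simp only [Function.comp, mul_zero, mul_one, coeff_Q_zero, hQ2]
    push_cast
    ring
  rw [hval, Complex.hasSum_ofReal] at hq
  have ht := hq.tsum_eq
  rw [tsum_mul_right] at ht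
  have hsum : ∑' n, T n = (2 * x ^ 3 / Real.sin x ^ 3 - (2 + x ^ 2)) / x ^ 3 := by
    rw [eq_div_iff (pow_ne_zero 3 hx)]; exact ht
  rw [hsum]
  have hs0 : Real.sin x ≠ 0 := by
    intro h
    exact hx ((Real.sin_eq_zero_iff_of_lt_of_lt (abs_lt.mp h2).1 (abs_lt.mp h2).2).mp h)
  field_simp
  ring
end
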